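/- Let G be a strongly connected countable directed graph, F : E → ℝ a function and β ∈ ℝ. Then A(β) is recurrent if and only if Σ_{k≥1} l^k_{vv}(β) ≥ 1 for some (and hence every) vertex v ∈ V, and A(β) is transient if and only if Σ_{k≥1} l^k_{vv}(β) < 1 for some (and hence every) vertex v ∈ V. -/

import Mathlib

open scoped ENNReal NNReal Classical
open Filter MeasureTheory

/-- A countable directed graph: countable sets of vertices and edges with
source and range maps. -/
structure DirGraph where
  V : Type
  E : Type
  countV : Countable V
  countE : Countable E
  s : E → V
  r : E → V

namespace DirGraph

attribute [instance] countV countE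

variable (G : DirGraph)

/-- `μ` is a finite path (a vertex counts as the empty path). -/
def IsPath (μ : List G.E) : Prop := μ.Chain' (fun e f => G.r e = G.s f)

/-- `μ` is a finite path from `u` to `w`. -/
def IsPathFrom (μ : List G.E) (u w : G.V) : Prop :=
  G.IsPath μ ∧ (∀ e ∈ μ.head?, G.s e = u) ∧ (∀ e ∈ μ.getLast?, G.r e = w) ∧ (μ = [] → u = w)

/-- A function `F : E → ℝ` extended to finite paths. -/
def Fsum (F : G.E → ℝ) (μ : List G.E) : ℝ := (μ.map F).sum

/-- The matrix `A(β)` over the vertices, with entries in `[0,∞]`: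
`A(β)_{uw} = Σ_{e : u → w} e^{-β F(e)}`. -/
noncomputable def Amat (F : G.E → ℝ) (β : ℝ) (u w : G.V) : ℝ≥0∞ :=
  ∑' e : {e : G.E // G.s e = u ∧ G.r e = w}, ENNReal.ofReal (Real.exp (-β * F e.1))

/-- The powers of the matrix `A(β)`, defined recursively; `A(β)⁰` is the identity matrix. -/
noncomputable def Apow (F : G.E → ℝ) (β : ℝ) : ℕ → G.V → G.V → ℝ≥0∞
  | 0, u, w => if u = w then 1 else 0
  | n + 1, u, w => ∑' x : G.V, G.Amat F β u x * Apow F β n x w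

/-- A sink is a vertex emitting no edges. -/
def IsSink (v : G.V) : Prop := ∀ e : G.E, G.s e ≠ v

/-- An infinite emitter is a vertex emitting infinitely many edges. -/
def InfEmitter (v : G.V) : Prop := {e : G.E | G.s e = v}.Infinite

/-- A set of vertices is hereditary when it is closed under following edges. -/
def Hereditary (H : Set G.V) : Prop := ∀ e : G.E, G.s e ∈ H → G.r e ∈ H

/-- A set of vertices `H` is saturated when every vertex of `V ∖ V∞` all of whose
successors lie in `H` belongs to `H`. -/
def Saturated (H : Set G.V) : Prop :=
  ∀ v : G.V, ¬ G.IsSink v → ¬ G.InfEmitter v → (∀ e : G.E, G.s e = v → G.r e ∈ H) → v ∈ H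

/-- `G` is cofinal when the only nonempty hereditary and saturated set of
vertices is the whole vertex set. -/
def Cofinal : Prop :=
  ∀ H : Set G.V, H.Nonempty → G.Hereditary H → G.Saturated H → H = Set.univ

/-- The set of non-wandering vertices: those lying on a loop of length ≥ 1. -/
def NW : Set G.V := {v | ∃ μ : List G.E, μ ≠ [] ∧ G.IsPathFrom μ v v}

/-- `G` is strongly connected when there is a finite path between any two vertices. -/
def StronglyConnected : Prop := ∀ u w : G.V, ∃ μ : List G.E, G.IsPathFrom μ u w

/-- `G` is row-finite when every vertex emits only finitely many edges. -/
def RowFinite : Prop := ∀ v : G.V, {e : G.E | G.s e = v}.Finite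

/-- `ψ` is an `A(β)`-harmonic vector. -/
def Harmonic (F : G.E → ℝ) (β : ℝ) (ψ : G.V → ℝ≥0) : Prop :=
  ∀ v : G.V, ∑' w : G.V, G.Amat F β v w * ψ w = (ψ v : ℝ≥0∞)

/-- `A(β)` is transient when `Σ_n A(β)ⁿ_{vv} < ∞` for every vertex. -/
def Transient (F : G.E → ℝ) (β : ℝ) : Prop :=
  ∀ v : G.V, ∑' n : ℕ, G.Apow F β n v v ≠ ⊤

/-- `A(β)` is recurrent when `Σ_n A(β)ⁿ_{vv} = ∞` for some vertex. -/
def Recurrent (F : G.E → ℝ) (β : ℝ) : Prop :=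
  ∃ v : G.V, ∑' n : ℕ, G.Apow F β n v v = ⊤

/-- An exit path: a sequence of vertices joined by edges which leaves every
finite set of vertices. -/
def IsExitPath (t : ℕ → G.V) : Prop :=
  (∀ i : ℕ, ∃ e : G.E, G.s e = t i ∧ G.r e = t (i + 1)) ∧
  ∀ M : Set G.V, M.Finite → ∃ N : ℕ, ∀ i : ℕ, N ≤ i → t i ∉ M

/-- Tail equivalence of vertex sequences. -/
def TailEquiv (t t' : ℕ → G.V) : Prop :=
  ∃ k : ℤ, ∃ N : ℕ, ∀ i : ℕ, N ≤ i → 0 ≤ (i : ℤ) + k ∧ t ((i : ℤ) + k).toNat = t' i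

/-- A simple loop based at `v`: a loop which returns to `v` only at the very end. -/
def IsSimpleLoop (v : G.V) (μ : List G.E) : Prop :=
  μ ≠ [] ∧ G.IsPathFrom μ v v ∧
  ∀ (i : ℕ) (h : i + 1 < μ.length), G.r (μ.get ⟨i, Nat.lt_of_succ_lt h⟩) ≠ v

/-- `lⁿ_{vv}(β)`: the weighted number of simple loops of length `n` based at `v`. -/
noncomputable def loopSum (F : G.E → ℝ) (β : ℝ) (v : G.V) (n : ℕ) : ℝ≥0∞ :=
  ∑' μ : {μ : List G.E // μ.length = n ∧ G.IsSimpleLoop v μ},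
    ENNReal.ofReal (Real.exp (-β * G.Fsum F μ.1))

/-- The space `P(G)` of infinite paths in `G`. -/
def PathSpace : Type := {p : ℕ → G.E // ∀ i : ℕ, G.r (p i) = G.s (p (i + 1))}

/-- The Borel σ-algebra of `P(G)` as a subspace of the product `E^ℕ` with `E`
discrete (for a countable discrete space, the Borel σ-algebra is the power set). -/
instance : MeasurableSpace G.PathSpace :=
  letI : MeasurableSpace G.E := ⊤
  inferInstanceAs (MeasurableSpace {p : ℕ → G.E // ∀ i : ℕ, G.r (p i) = G.s (p (i + 1))})

/-- The cylinder set `Z'(v)` of infinite paths starting at the vertex `v`. -/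
def cylV (v : G.V) : Set G.PathSpace := {p | G.s (p.1 0) = v}

/-- The cylinder set `Z'(μ)` of infinite paths beginning with the finite path `μ`. -/
def cylP (μ : List G.E) : Set G.PathSpace :=
  {p | ∀ (i : ℕ) (h : i < μ.length), p.1 i = μ.get ⟨i, h⟩}

/-- The set `P(G)_wan` of wandering infinite paths: those visiting each vertex
only finitely many times. -/
def wanSet : Set G.PathSpace := {p | ∀ v : G.V, {i : ℕ | G.s (p.1 i) = v}.Finite}

end DirGraph

namespace DirGraph

variable (G : DirGraph)

/-- weight of an edge -/
noncomputable def wE (F : G.E → ℝ) (β : ℝ) (e : G.E) : ℝ≥0∞ :=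
  ENNReal.ofReal (Real.exp (-β * F e))

/-- weight of a path -/
noncomputable def wP (F : G.E → ℝ) (β : ℝ) (μ : List G.E) : ℝ≥0∞ :=
  ENNReal.ofReal (Real.exp (-β * G.Fsum F μ))

theorem wP_nil (F : G.E → ℝ) (β : ℝ) : G.wP F β [] = 1 := by
  simp [wP, Fsum]

theorem wP_cons (F : G.E → ℝ) (β : ℝ) (e : G.E) (μ : List G.E) :
    G.wP F β (e :: μ) = G.wE F β e * G.wP F β μ := by
  simp only [wP, wE, Fsum, List.map_cons, List.sum_cons]
  rw [← ENNReal.ofReal_mul (Real.exp_nonneg _), ← Real.exp_add]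
  congr 2
  ring

theorem wE_pos (F : G.E → ℝ) (β : ℝ) (e : G.E) : G.wE F β e ≠ 0 := by
  simp [wE, Real.exp_pos]

theorem Amat_eq (F : G.E → ℝ) (β : ℝ) (u x : G.V) :
    G.Amat F β u x = ∑' e : G.E, if G.s e = u ∧ G.r e = x then G.wE F β e else 0 := by
  unfold Amat
  rw [show (∑' e : {e : G.E // G.s e = u ∧ G.r e = x}, ENNReal.ofReal (Real.exp (-β * F e.1)))
    = ∑' e : ({e : G.E | G.s e = u ∧ G.r e = x} : Set G.E), G.wE F β e.1 from rfl, tsum_subtype]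
  refine tsum_congr fun e => ?_
  simp [Set.indicator_apply]

theorem Amat_mul (F : G.E → ℝ) (β : ℝ) (u : G.V) (c : G.V → ℝ≥0∞) :
    ∑' x, G.Amat F β u x * c x = ∑' e : G.E, if G.s e = u then G.wE F β e * c (G.r e) else 0 := by
  simp_rw [Amat_eq, ← ENNReal.tsum_mul_right]
  rw [ENNReal.tsum_comm]
  refine tsum_congr fun e => ?_
  rw [tsum_eq_single (G.r e)]
  · by_cases h : G.s e = u <;> simp [h]
  · intro x hx
    simp [hx.symm]

/-- `μ` leads from `u` to `v` and hits `v` only at its end. -/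
def Hit (v : G.V) : G.V → List G.E → Prop
  | u, [] => u = v
  | u, e :: μ => u ≠ v ∧ G.s e = u ∧ Hit v (G.r e) μ

theorem isPath_iff (μ : List G.E) :
    G.IsPath μ ↔ μ.IsChain (fun e f => G.r e = G.s f) := Iff.rfl

theorem isPathFrom_nil (u w : G.V) : G.IsPathFrom [] u w ↔ u = w := by
  simp [IsPathFrom, isPath_iff]

theorem isPathFrom_cons (e : G.E) (μ : List G.E) (u w : G.V) :
    G.IsPathFrom (e :: μ) u w ↔ G.s e = u ∧ G.IsPathFrom μ (G.r e) w := by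
  cases μ with
  | nil => simp [IsPathFrom, isPath_iff]
  | cons f μ =>
    simp [IsPathFrom, isPath_iff, eq_comm (a := G.r e)]
    tauto

theorem simple_iff (v : G.V) (μ : List G.E) : ∀ (e : G.E) (u : G.V),
    (G.IsPathFrom (e :: μ) u v ∧ ∀ (i : ℕ) (h : i + 1 < (e :: μ).length),
      G.r ((e :: μ).get ⟨i, Nat.lt_of_succ_lt h⟩) ≠ v) ↔ G.s e = u ∧ G.Hit v (G.r e) μ := by
  induction μ with
  | nil =>
    intro e u
    simp [isPathFrom_cons, isPathFrom_nil, Hit]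
  | cons f μ ih =>
    intro e u
    rw [isPathFrom_cons, Hit, ← ih f (G.r e)]
    constructor
    · rintro ⟨⟨h1, h2⟩, h3⟩
      refine ⟨h1, h3 0 (by simp), h2, fun i h => ?_⟩
      exact h3 (i + 1) (by simpa using h)
    · rintro ⟨h1, h2, h3, h4⟩
      refine ⟨⟨h1, h3⟩, fun i h => ?_⟩
      cases i with
      | zero => exact h2
      | succ i => exact h4 i (by simpa using h)

theorem tsum_list {α : Type} (g : List α → ℝ≥0∞) :
    ∑' μ, g μ = g [] + ∑' e, ∑' μ, g (e :: μ) := by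
  let φ : Unit ⊕ (α × List α) ≃ List α :=
    { toFun := fun x => match x with
        | Sum.inl _ => []
        | Sum.inr p => p.1 :: p.2
      invFun := fun l => match l with
        | [] => Sum.inl ()
        | a :: l => Sum.inr (a, l)
      left_inv := by rintro (_ | ⟨a, l⟩) <;> rfl
      right_inv := by rintro (_ | ⟨a, l⟩) <;> rfl }
  rw [← φ.tsum_eq, Summable.tsum_sum ENNReal.summable ENNReal.summable]
  congr 1
  · simp [φ]
  · rw [ENNReal.tsum_prod']
    rfl

/-- first hitting sums -/
noncomputable def q (F : G.E → ℝ) (β : ℝ) (v : G.V) : ℕ → G.V → ℝ≥0∞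
  | 0, u => if u = v then 1 else 0
  | n + 1, u => if u = v then 0 else ∑' x, G.Amat F β u x * q F β v n x

theorem q_eq (F : G.E → ℝ) (β : ℝ) (v : G.V) (n : ℕ) : ∀ u,
    ∑' μ : List G.E, (if μ.length = n ∧ G.Hit v u μ then G.wP F β μ else 0) = G.q F β v n u := by
  induction n with
  | zero =>
    intro u
    rw [tsum_list]
    simp [Hit, q, wP_nil]
  | succ n ih =>
    intro u
    rw [tsum_list, q, if_neg (by simp), zero_add]
    simp only [wP_cons]
    by_cases hu : u = v
    · simp [hu, Hit]
    · rw [if_neg hu, Amat_mul]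
      refine tsum_congr fun e => ?_
      by_cases he : G.s e = u
      · rw [if_pos he, ← ih, ← ENNReal.tsum_mul_left]
        refine tsum_congr fun μ => ?_
        simp [hu, he, Hit]
      · simp [he, Hit]

theorem loopSum_eq (F : G.E → ℝ) (β : ℝ) (v : G.V) (n : ℕ) :
    G.loopSum F β v (n + 1) = ∑' x, G.Amat F β v x * G.q F β v n x := by
  have : G.loopSum F β v (n + 1) = ∑' μ : List G.E,
      if μ.length = n + 1 ∧ G.IsSimpleLoop v μ then G.wP F β μ else 0 := by
    rw [show G.loopSum F β v (n + 1) =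
      ∑' μ : ({μ : List G.E | μ.length = n + 1 ∧ G.IsSimpleLoop v μ} : Set (List G.E)),
        G.wP F β μ.1 from rfl, tsum_subtype]
    refine tsum_congr fun e => ?_
    simp [Set.indicator_apply]
  rw [this, tsum_list, Amat_mul, if_neg (by simp), zero_add]
  refine tsum_congr fun e => ?_
  have key : ∀ μ, G.IsSimpleLoop v (e :: μ) ↔ G.s e = v ∧ G.Hit v (G.r e) μ := by
    intro μ
    rw [← simple_iff]
    unfold IsSimpleLoop
    simp
  simp only [key, List.length_cons, wP_cons]
  by_cases he : G.s e = v
  · rw [if_pos he, ← q_eq, ← ENNReal.tsum_mul_left]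
    refine tsum_congr fun μ => ?_
    simp [he]
  · simp [he]

theorem q_self (F : G.E → ℝ) (β : ℝ) (v : G.V) (n : ℕ) : G.q F β v (n + 1) v = 0 := by
  simp [q]

theorem step (F : G.E → ℝ) (β : ℝ) (v : G.V) (n : ℕ)
    (h : ∀ u, G.Apow F β n u v
      = ∑ k ∈ Finset.range (n + 1), G.q F β v k u * G.Apow F β (n - k) v v) (u : G.V) :
    G.Apow F β (n + 1) u v = ∑ k ∈ Finset.range (n + 1),
      (∑' x, G.Amat F β u x * G.q F β v k x) * G.Apow F β (n - k) v v := by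
  rw [Apow]
  simp_rw [h, Finset.mul_sum, ← ENNReal.tsum_mul_right]
  rw [Summable.tsum_finsetSum (fun _ _ => ENNReal.summable)]
  simp_rw [mul_assoc]

theorem renewal_q (F : G.E → ℝ) (β : ℝ) (v : G.V) (n : ℕ) : ∀ u, G.Apow F β n u v
      = ∑ k ∈ Finset.range (n + 1), G.q F β v k u * G.Apow F β (n - k) v v := by
  induction n with
  | zero => intro u; simp [Apow, q]
  | succ n ih =>
    intro u
    rw [Finset.sum_range_succ']
    by_cases hu : u = v
    · subst hu
      simp [q]
    · rw [G.step F β v n ih u]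
      simp [q, hu]

theorem renewal (F : G.E → ℝ) (β : ℝ) (v : G.V) (n : ℕ) :
    G.Apow F β (n + 1) v v = ∑ k ∈ Finset.range (n + 1),
      G.loopSum F β v (k + 1) * G.Apow F β (n - k) v v := by
  rw [G.step F β v n (G.renewal_q F β v n) v]
  simp_rw [loopSum_eq]

theorem green_eq (F : G.E → ℝ) (β : ℝ) (v : G.V) :
    ∑' n, G.Apow F β n v v
      = 1 + (∑' k, G.loopSum F β v (k + 1)) * ∑' n, G.Apow F β n v v := by
  conv_lhs => rw [tsum_eq_zero_add' ENNReal.summable]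
  congr 1
  · simp [Apow]
  · simp_rw [renewal]
    rw [← ENNReal.tsum_mul_right]
    simp_rw [← ENNReal.tsum_mul_left]
    rw [← ENNReal.tsum_prod (f := fun k n => G.loopSum F β v (k + 1) * G.Apow F β n v v),
      ← Finset.HasAntidiagonal.sigmaAntidiagonalEquivProd.tsum_eq, ENNReal.tsum_sigma']
    refine tsum_congr fun n => ?_
    rw [← Finset.Nat.sum_antidiagonal_eq_sum_range_succ
      (fun k m => G.loopSum F β v (k + 1) * G.Apow F β m v v)]
    rw [tsum_fintype, ← Finset.sum_coe_sort]
    rfl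

theorem green_partial (F : G.E → ℝ) (β : ℝ) (v : G.V)
    (hL : ∑' k, G.loopSum F β v (k + 1) < 1) (N : ℕ) :
    ∑ n ∈ Finset.range N, G.Apow F β n v v ≤ (1 - ∑' k, G.loopSum F β v (k + 1))⁻¹ := by
  set L := ∑' k, G.loopSum F β v (k + 1) with hLdef
  have hfix : 1 + L * (1 - L)⁻¹ = (1 - L)⁻¹ := by
    have h1 : (1 - L) ≠ 0 := (tsub_pos_of_lt hL).ne'
    have h2 : (1 - L) ≠ ⊤ := (lt_of_le_of_lt tsub_le_self ENNReal.one_lt_top).ne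
    nth_rw 1 [← ENNReal.mul_inv_cancel h1 h2]
    rw [← add_mul, tsub_add_cancel_of_le hL.le, one_mul]
  induction N with
  | zero => simp
  | succ N ih =>
    rw [← hfix, Finset.sum_range_succ']
    rw [add_comm]
    refine add_le_add (by simp [Apow]) ?_
    refine le_trans ?_ (mul_le_mul_right ih L)
    simp_rw [renewal]
    calc ∑ n ∈ Finset.range N, ∑ k ∈ Finset.range (n + 1),
          G.loopSum F β v (k + 1) * G.Apow F β (n - k) v v
        = ∑ k ∈ Finset.range N, ∑ n ∈ Finset.Ico k N,
          G.loopSum F β v (k + 1) * G.Apow F β (n - k) v v := by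
          refine Finset.sum_comm' fun x y => ?_
          simp
          omega
      _ ≤ ∑ k ∈ Finset.range N, G.loopSum F β v (k + 1) *
            ∑ n ∈ Finset.range N, G.Apow F β n v v := by
          refine Finset.sum_le_sum fun k _ => ?_
          rw [← Finset.mul_sum]
          refine mul_le_mul_right ?_ _
          rw [Finset.sum_Ico_eq_sum_range]
          simp only [Nat.add_sub_cancel_left]
          exact Finset.sum_le_sum_of_subset (Finset.range_mono (Nat.sub_le _ _))
      _ ≤ L * ∑ n ∈ Finset.range N, G.Apow F β n v v := by
          rw [← Finset.sum_mul]
          exact mul_le_mul_left (ENNReal.sum_le_tsum _) _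

theorem green_top_iff (F : G.E → ℝ) (β : ℝ) (v : G.V) :
    ∑' n, G.Apow F β n v v = ⊤ ↔ 1 ≤ ∑' k, G.loopSum F β v (k + 1) := by
  constructor
  · intro h
    by_contra hL
    rw [not_le] at hL
    have h3 : ∑' n, G.Apow F β n v v ≤ (1 - ∑' k, G.loopSum F β v (k + 1))⁻¹ := by
      rw [ENNReal.tsum_eq_iSup_nat]
      exact iSup_le (G.green_partial F β v hL)
    rw [h, top_le_iff, ENNReal.inv_eq_top] at h3
    exact (tsub_pos_of_lt hL).ne' h3
  · intro hL
    by_contra h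
    have h1 := G.green_eq F β v
    have h2 : 1 + ∑' n, G.Apow F β n v v ≤ ∑' n, G.Apow F β n v v := by
      conv_rhs => rw [h1]
      refine add_le_add le_rfl ?_
      calc _ = 1 * ∑' n, G.Apow F β n v v := (one_mul _).symm
        _ ≤ _ := mul_le_mul_left hL _
    rw [add_comm] at h2
    exact absurd h2 (not_le.2 (ENNReal.lt_add_right h one_ne_zero))

theorem Apow_add (F : G.E → ℝ) (β : ℝ) (m n : ℕ) : ∀ u w,
    G.Apow F β (m + n) u w = ∑' x, G.Apow F β m u x * G.Apow F β n x w := by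
  induction m with
  | zero =>
    intro u w
    rw [tsum_eq_single u]
    · simp [Apow]
    · intro x hx
      simp [Apow, hx.symm]
  | succ m ih =>
    intro u w
    rw [show m + 1 + n = (m + n) + 1 by omega]
    simp only [Apow, ih]
    simp_rw [← ENNReal.tsum_mul_left, ← ENNReal.tsum_mul_right]
    rw [ENNReal.tsum_comm]
    simp_rw [mul_assoc]

theorem Apow_le (F : G.E → ℝ) (β : ℝ) (m n : ℕ) (u x w : G.V) :
    G.Apow F β m u x * G.Apow F β n x w ≤ G.Apow F β (m + n) u w := by
  rw [Apow_add]
  exact ENNReal.le_tsum (f := fun x => G.Apow F β m u x * G.Apow F β n x w) x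

theorem Apow_pos (F : G.E → ℝ) (β : ℝ) (w : G.V) (μ : List G.E) : ∀ u,
    G.IsPathFrom μ u w → G.Apow F β μ.length u w ≠ 0 := by
  induction μ with
  | nil => intro u h; simp [Apow, (G.isPathFrom_nil u w).1 h]
  | cons e μ ih =>
    intro u h
    rw [isPathFrom_cons] at h
    rw [List.length_cons, Apow, Amat_mul]
    intro h0
    rw [ENNReal.tsum_eq_zero] at h0
    have := h0 e
    rw [if_pos h.1] at this
    exact mul_ne_zero (G.wE_pos F β e) (ih _ h.2) this

theorem solidarity (hSC : G.StronglyConnected) (F : G.E → ℝ) (β : ℝ) (u v : G.V)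
    (h : ∑' n, G.Apow F β n u u = ⊤) : ∑' n, G.Apow F β n v v = ⊤ := by
  obtain ⟨μ, hμ⟩ := hSC v u
  obtain ⟨ν, hν⟩ := hSC u v
  have a := G.Apow_pos F β u μ v hμ
  have b := G.Apow_pos F β v ν u hν
  rw [← top_le_iff]
  calc ⊤ = G.Apow F β μ.length v u * (∑' n, G.Apow F β n u u) * G.Apow F β ν.length u v := by
        rw [h, ENNReal.mul_top a, ENNReal.top_mul b]
    _ = ∑' n, G.Apow F β μ.length v u * G.Apow F β n u u * G.Apow F β ν.length u v := by
        rw [← ENNReal.tsum_mul_left, ← ENNReal.tsum_mul_right]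
    _ ≤ ∑' n, G.Apow F β (μ.length + n + ν.length) v v := by
        refine ENNReal.tsum_le_tsum fun n => ?_
        exact (mul_le_mul_left (G.Apow_le F β _ _ _ _ _) _).trans (G.Apow_le F β _ _ _ _ _)
    _ ≤ ∑' n, G.Apow F β n v v :=
        ENNReal.tsum_comp_le_tsum_of_injective
          (f := fun n => μ.length + n + ν.length) (fun x y hxy => by
            simp only at hxy
            omega) (fun n => G.Apow F β n v v)

end DirGraph

/-- recurrence/transience criterion in terms of simple loops. -/
theorem stmt_12 (G : DirGraph) [Nonempty G.V] (hSC : G.StronglyConnected)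
    (F : G.E → ℝ) (β : ℝ) :
    (G.Recurrent F β ↔ ∃ v : G.V, 1 ≤ ∑' k : ℕ, G.loopSum F β v (k + 1)) ∧
    (G.Recurrent F β ↔ ∀ v : G.V, 1 ≤ ∑' k : ℕ, G.loopSum F β v (k + 1)) ∧
    (G.Transient F β ↔ ∃ v : G.V, ∑' k : ℕ, G.loopSum F β v (k + 1) < 1) ∧
    (G.Transient F β ↔ ∀ v : G.V, ∑' k : ℕ, G.loopSum F β v (k + 1) < 1) := by
  have hiff := G.green_top_iff F β
  have hsol := G.solidarity hSC F β
  have hT : G.Transient F β ↔ ¬ G.Recurrent F β := by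
    simp [DirGraph.Transient, DirGraph.Recurrent]
  have h1 : G.Recurrent F β ↔ ∃ v : G.V, 1 ≤ ∑' k : ℕ, G.loopSum F β v (k + 1) := by
    simp only [DirGraph.Recurrent, hiff]
  have h2 : G.Recurrent F β ↔ ∀ v : G.V, 1 ≤ ∑' k : ℕ, G.loopSum F β v (k + 1) := by
    constructor
    · rintro ⟨u, hu⟩ v
      exact (hiff v).1 (hsol u v hu)
    · intro h
      obtain ⟨v⟩ := ‹Nonempty G.V›
      exact ⟨v, (hiff v).2 (h v)⟩
  refine ⟨h1, h2, ?_, ?_⟩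
  · rw [hT, h2]
    simp only [not_forall, not_le]
  · rw [hT, h1]
    simp only [not_exists, not_le]
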